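/- Let G be a simple graph with n vertices and e edges, and let c = 2e/n². Then the number N' of 4-edge walks in G satisfies N' ≤ max( (1−√(1−c))²·((c+1)√(1−c)+c), c^{5/2} )·n⁵. -/

import Mathlib

/-- The number of 4-edge walks in `G`: sequences of 5 (not necessarily distinct)
vertices with consecutive vertices adjacent. -/
noncomputable def walkCount4 {V : Type*} (G : SimpleGraph V) : ℕ :=
  Nat.card {f : Fin 5 → V // ∀ i : Fin 4, G.Adj (f i.castSucc) (f i.succ)}

/-! Counting walks by their midpoint, `N' = ∑ v, g v ^ 2` where `g v` is the number of two-edge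
walks starting at `v`. The Kelmans shift from `u` to `v`, which moves to `v` the neighbours that
`u` has and `v` lacks, changes the adjacency matrix by `p δᵀ + δ pᵀ` with `δ = e_v - e_u`. It
preserves `e`, does not decrease `N'`, and strictly increases the sum of squared degrees as long as
each of `u`, `v` has a neighbour the other lacks. So some extremal graph has nested neighbourhoods,
and such a graph is split: a clique `A` together with an independent set.

In a split graph let `a = |A| / n`, let `r` be the normalised degree sum outside `A`, and put
`c = a² + 2 r`. The walks lost inside `A` to non-adjacent outer vertices pay for a concave part of
`g v ^ 2` outside `A`, and what remains is at most `L` times the normalised degree `m` of `v`.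
By convexity `L` has to be checked at two degrees only: `m = a`, and the kink `m = y` of the bound
`g v ≤ n ^ 2 * min m (a m + r)`. Either way `a c² + r L` is at most the larger of the values at
the quasi-star and the quasi-clique with the same `c`.

Since a split graph has `c n² = 2 e + |A|`, this proves the claim up to an error `1 / n` in the
density. Blowing up every vertex into `k` independent copies multiplies both sides by `k ^ 5` and
makes the error tend to zero.
-/

open Filter Finset Matrix Topology

section Walks

theorem sum_prod_path_eq_pow_mulVec_one {V R : Type*} [Fintype V] [DecidableEq V] [CommSemiring R]
    (M : Matrix V V R) (k : ℕ) (v : V) :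
    ∑ f : Fin k → V, ∏ i, M (Fin.cons (α := fun _ ↦ V) v f i.castSucc) (f i) = (M ^ k *ᵥ 1) v := by
  induction k generalizing v with
  | zero => simp
  | succ k ih =>
    rw [pow_succ', ← mulVec_mulVec, ← (Fin.consEquiv fun _ : Fin (k + 1) ↦ V).sum_comp,
      Fintype.sum_prod_type]
    refine sum_congr rfl fun w _ ↦ ?_
    rw [← ih w, mul_sum]
    exact sum_congr rfl fun f _ ↦ Fin.prod_univ_succ _

variable {V : Type*} (G : SimpleGraph V)

open Classical in
/-- The adjacency matrix of `G` with real entries; adjacency is decided classically, so that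
different graphs can be compared without carrying decidability instances. -/
noncomputable def realAdjMatrix : Matrix V V ℝ := G.adjMatrix ℝ

variable {G} in
theorem realAdjMatrix_of_adj {v w : V} (h : G.Adj v w) : realAdjMatrix G v w = 1 := by
  simp [realAdjMatrix, h]

variable {G} in
theorem realAdjMatrix_of_not_adj {v w : V} (h : ¬ G.Adj v w) : realAdjMatrix G v w = 0 := by
  simp [realAdjMatrix, h]

theorem realAdjMatrix_nonneg (v w : V) : 0 ≤ realAdjMatrix G v w := by
  by_cases h : G.Adj v w
  · simp [realAdjMatrix_of_adj h]
  · simp [realAdjMatrix_of_not_adj h]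

theorem realAdjMatrix_le_one (v w : V) : realAdjMatrix G v w ≤ 1 := by
  by_cases h : G.Adj v w
  · simp [realAdjMatrix_of_adj h]
  · simp [realAdjMatrix_of_not_adj h]

theorem transpose_realAdjMatrix : (realAdjMatrix G)ᵀ = realAdjMatrix G := by
  rw [realAdjMatrix, SimpleGraph.transpose_adjMatrix]

theorem realAdjMatrix_comm (v w : V) : realAdjMatrix G v w = realAdjMatrix G w v :=
  congrFun₂ (transpose_realAdjMatrix G) w v

variable [Fintype V]

theorem dotProduct_realAdjMatrix_mulVec (x y : V → ℝ) :
    x ⬝ᵥ realAdjMatrix G *ᵥ y = (realAdjMatrix G *ᵥ x) ⬝ᵥ y := by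
  rw [dotProduct_mulVec, ← mulVec_transpose, transpose_realAdjMatrix]

/-- The vector whose entry at `v` is the number of `k`-edge walks starting at `v`. -/
noncomputable def walkVec : ℕ → V → ℝ
  | 0 => 1
  | k + 1 => realAdjMatrix G *ᵥ walkVec k

theorem walkVec_succ_apply (k : ℕ) (v : V) :
    walkVec G (k + 1) v = ∑ w, realAdjMatrix G v w * walkVec G k w := rfl

theorem walkVec_one_apply (v : V) : walkVec G 1 v = ∑ w, realAdjMatrix G v w := by
  simp [walkVec, mulVec, dotProduct]

theorem walkVec_nonneg (k : ℕ) (v : V) : 0 ≤ walkVec G k v := by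
  induction k generalizing v with
  | zero => exact zero_le_one
  | succ k ih => exact sum_nonneg fun w _ ↦ mul_nonneg (realAdjMatrix_nonneg G v w) (ih w)

theorem realAdjMatrix_le_walkVec_one (v w : V) : realAdjMatrix G v w ≤ walkVec G 1 v := by
  rw [walkVec_one_apply]
  exact single_le_sum (fun w _ ↦ realAdjMatrix_nonneg G v w) (mem_univ w)

theorem walkVec_one_le_card (v : V) : walkVec G 1 v ≤ Fintype.card V := by
  rw [walkVec_one_apply, ← card_univ, ← nsmul_one]
  exact sum_le_card_nsmul _ _ _ fun w _ ↦ realAdjMatrix_le_one G v w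

theorem sum_walkVec_one : ∑ v, walkVec G 1 v = 2 * (Nat.card G.edgeSet : ℝ) := by
  classical
  have degree_eq (v : V) : walkVec G 1 v = G.degree v := by
    simp [walkVec_one_apply, G.degree_eq_sum_if_adj, realAdjMatrix]
  simp only [degree_eq]
  rw [Nat.card_eq_fintype_card, ← SimpleGraph.edgeFinset_card]
  exact_mod_cast G.sum_degrees_eq_twice_card_edges

theorem one_dotProduct_walkVec_add (j k : ℕ) :
    1 ⬝ᵥ walkVec G (j + k) = walkVec G j ⬝ᵥ walkVec G k := by
  induction j generalizing k with
  | zero => rw [zero_add, walkVec]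
  | succ j ih =>
    rw [add_right_comm, add_assoc, ih, walkVec, walkVec, dotProduct_realAdjMatrix_mulVec]

theorem walkVec_eq_pow_mulVec_one [DecidableEq V] (k : ℕ) :
    walkVec G k = realAdjMatrix G ^ k *ᵥ 1 := by
  induction k with
  | zero => rw [pow_zero, one_mulVec, walkVec]
  | succ k ih => rw [pow_succ', ← mulVec_mulVec, ← ih, walkVec]

theorem walkCount4_eq_one_dotProduct : (walkCount4 G : ℝ) = 1 ⬝ᵥ walkVec G 4 := by
  classical
  calc (walkCount4 G : ℝ)
      = ∑ f : Fin 5 → V, ∏ i : Fin 4, realAdjMatrix G (f i.castSucc) (f i.succ) := by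
        rw [walkCount4, Nat.card_eq_fintype_card, Fintype.card_subtype, card_filter]
        push_cast
        refine sum_congr rfl fun f _ ↦ ?_
        simp [realAdjMatrix, prod_ite_zero]
    _ = ∑ v, walkVec G 4 v := by
        rw [← (Fin.consEquiv fun _ : Fin 5 ↦ V).sum_comp, Fintype.sum_prod_type,
          walkVec_eq_pow_mulVec_one]
        exact sum_congr rfl fun v _ ↦ sum_prod_path_eq_pow_mulVec_one (realAdjMatrix G) 4 v
    _ = 1 ⬝ᵥ walkVec G 4 := (one_dotProduct _).symm

theorem walkCount4_eq_dotProduct : (walkCount4 G : ℝ) = walkVec G 2 ⬝ᵥ walkVec G 2 := by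
  rw [walkCount4_eq_one_dotProduct, ← one_dotProduct_walkVec_add]

end Walks

section KelmansShift

variable {V : Type*} (G : SimpleGraph V) (u v : V)

/-- The neighbours of `u` that are neither `v` nor a neighbour of `v`. -/
def privateNeighbors : Set V := {w | G.Adj u w ∧ w ≠ v ∧ ¬ G.Adj v w}

/-- The indicator vector of `privateNeighbors G u v`. -/
noncomputable def privateVec : V → ℝ := (privateNeighbors G u v).indicator 1

/-- The Kelmans shift of `G` from `u` to `v`: every private neighbour of `u` is detached from `u`
and attached to `v`. -/
def kelmansShift : SimpleGraph V :=
  G.deleteEdges ((s(u, ·)) '' privateNeighbors G u v) ⊔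
    SimpleGraph.fromEdgeSet ((s(v, ·)) '' privateNeighbors G u v)

/-- The difference `e_v - e_u` of coordinate vectors: the direction in which `kelmansShift G u v`
perturbs the rows of the adjacency matrix. -/
noncomputable def shiftVec : V → ℝ := Set.indicator {v} 1 - Set.indicator {u} 1

variable {u v}

theorem kelmansShift_adj {x y : V} : (kelmansShift G u v).Adj x y ↔
    (G.Adj x y ∧ ¬ (x = u ∧ y ∈ privateNeighbors G u v ∨ y = u ∧ x ∈ privateNeighbors G u v)) ∨
      (x = v ∧ y ∈ privateNeighbors G u v ∨ y = v ∧ x ∈ privateNeighbors G u v) := by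
  simp only [kelmansShift, privateNeighbors, SimpleGraph.sup_adj, SimpleGraph.deleteEdges_adj,
    SimpleGraph.fromEdgeSet_adj, Set.mem_image, Sym2.eq_iff, Set.mem_ofPred_eq]
  grind

theorem privateVec_nonneg (w : V) : 0 ≤ privateVec G u v w :=
  Set.indicator_nonneg (fun _ _ ↦ zero_le_one) w

theorem realAdjMatrix_kelmansShift (huv : u ≠ v) :
    realAdjMatrix (kelmansShift G u v) = realAdjMatrix G
      + vecMulVec (privateVec G u v) (shiftVec u v)
      + vecMulVec (shiftVec u v) (privateVec G u v) := by
  classical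
  ext x y
  have := G.adj_comm x y
  have := G.irrefl (v := u)
  simp only [realAdjMatrix, SimpleGraph.adjMatrix_apply, kelmansShift_adj, privateVec,
    shiftVec, privateNeighbors, Matrix.add_apply, vecMulVec_apply, Set.indicator_apply,
    Pi.sub_apply, Pi.one_apply, Set.mem_ofPred_eq, Set.mem_singleton_iff]
  grind

variable [Fintype V]

theorem shiftVec_dotProduct (x : V → ℝ) : shiftVec u v ⬝ᵥ x = x v - x u := by
  classical
  simp [shiftVec, dotProduct, sub_mul, Pi.single_apply]

theorem shiftVec_dotProduct_one : shiftVec u v ⬝ᵥ 1 = 0 := by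
  simp [shiftVec_dotProduct]

theorem shiftVec_dotProduct_self (huv : u ≠ v) : shiftVec u v ⬝ᵥ shiftVec u v = 2 := by
  rw [shiftVec_dotProduct]
  norm_num [shiftVec, huv, huv.symm]

theorem shiftVec_dotProduct_privateVec : shiftVec u v ⬝ᵥ privateVec G u v = 0 := by
  simp [shiftVec_dotProduct, privateVec, privateNeighbors]

theorem shiftVec_dotProduct_privateVec_swap : shiftVec u v ⬝ᵥ privateVec G v u = 0 := by
  simp [shiftVec_dotProduct, privateVec, privateNeighbors]

theorem realAdjMatrix_mulVec_shiftVec (huv : u ≠ v) :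
    realAdjMatrix G *ᵥ shiftVec u v =
      privateVec G v u - privateVec G u v - realAdjMatrix G u v • shiftVec u v := by
  classical
  ext w
  have := G.adj_comm w u
  have := G.adj_comm w v
  have := G.adj_comm u v
  have := G.irrefl (v := u)
  have := G.irrefl (v := v)
  rw [mulVec, dotProduct_comm, shiftVec_dotProduct]
  simp only [realAdjMatrix, SimpleGraph.adjMatrix_apply, privateVec, shiftVec, privateNeighbors,
    Set.indicator_apply, Pi.sub_apply, Pi.smul_apply, Pi.one_apply, smul_eq_mul,
    Set.mem_ofPred_eq, Set.mem_singleton_iff]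
  grind

theorem shiftVec_dotProduct_walkVec_succ (huv : u ≠ v) (k : ℕ) :
    shiftVec u v ⬝ᵥ walkVec G (k + 1) = privateVec G v u ⬝ᵥ walkVec G k
      - privateVec G u v ⬝ᵥ walkVec G k
      - realAdjMatrix G u v * (shiftVec u v ⬝ᵥ walkVec G k) := by
  rw [walkVec, dotProduct_realAdjMatrix_mulVec, realAdjMatrix_mulVec_shiftVec G huv,
    sub_dotProduct, sub_dotProduct, smul_dotProduct, smul_eq_mul]

theorem shiftVec_dotProduct_walkVec_one (huv : u ≠ v) :
    shiftVec u v ⬝ᵥ walkVec G 1 = privateVec G v u ⬝ᵥ 1 - privateVec G u v ⬝ᵥ 1 := by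
  rw [shiftVec_dotProduct_walkVec_succ G huv, walkVec, shiftVec_dotProduct_one, mul_zero, sub_zero]

theorem kelmansShift_mulVec (huv : u ≠ v) (x : V → ℝ) :
    realAdjMatrix (kelmansShift G u v) *ᵥ x = realAdjMatrix G *ᵥ x
      + (shiftVec u v ⬝ᵥ x) • privateVec G u v + (privateVec G u v ⬝ᵥ x) • shiftVec u v := by
  simp only [realAdjMatrix_kelmansShift G huv, add_mulVec, vecMulVec_mulVec, op_smul_eq_smul]

theorem walkVec_one_kelmansShift (huv : u ≠ v) :
    walkVec (kelmansShift G u v) 1 =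
      walkVec G 1 + (privateVec G u v ⬝ᵥ 1) • shiftVec u v := by
  rw [walkVec, walkVec, kelmansShift_mulVec G huv, shiftVec_dotProduct_one, zero_smul, add_zero,
    walkVec, walkVec]

theorem walkVec_two_kelmansShift (huv : u ≠ v) :
    walkVec (kelmansShift G u v) 2 = walkVec G 2
      + ((privateVec G u v ⬝ᵥ 1) • privateVec G v u + (privateVec G v u ⬝ᵥ 1) • privateVec G u v)
      + (privateVec G u v ⬝ᵥ walkVec G 1 - realAdjMatrix G u v * (privateVec G u v ⬝ᵥ 1)) •
        shiftVec u v := by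
  rw [walkVec, walkVec_one_kelmansShift G huv, kelmansShift_mulVec G huv, mulVec_add, mulVec_smul,
    realAdjMatrix_mulVec_shiftVec G huv, dotProduct_add, dotProduct_add, dotProduct_smul,
    dotProduct_smul, shiftVec_dotProduct_self huv, shiftVec_dotProduct_walkVec_one G huv,
    dotProduct_comm (privateVec G u v) (shiftVec u v), shiftVec_dotProduct_privateVec,
    show walkVec G 2 = realAdjMatrix G *ᵥ walkVec G 1 from rfl]
  module

theorem sum_walkVec_one_kelmansShift (huv : u ≠ v) :
    ∑ x, walkVec (kelmansShift G u v) 1 x = ∑ x, walkVec G 1 x := by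
  rw [← dotProduct_one, walkVec_one_kelmansShift G huv, add_dotProduct, smul_dotProduct,
    shiftVec_dotProduct_one, smul_zero, add_zero, dotProduct_one]

theorem add_smul_shiftVec_dotProduct_self (huv : u ≠ v) (x : V → ℝ) (s : ℝ) :
    (x + s • shiftVec u v) ⬝ᵥ (x + s • shiftVec u v) =
      x ⬝ᵥ x + 2 * s * (s + shiftVec u v ⬝ᵥ x) := by
  simp only [add_dotProduct, dotProduct_add, smul_dotProduct, dotProduct_smul, smul_eq_mul,
    shiftVec_dotProduct_self huv, dotProduct_comm x]
  ring

theorem dotProduct_walkVec_one_kelmansShift (huv : u ≠ v) :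
    walkVec (kelmansShift G u v) 1 ⬝ᵥ walkVec (kelmansShift G u v) 1 =
      walkVec G 1 ⬝ᵥ walkVec G 1 + 2 * (privateVec G u v ⬝ᵥ 1) * (privateVec G v u ⬝ᵥ 1) := by
  rw [walkVec_one_kelmansShift G huv, add_smul_shiftVec_dotProduct_self huv,
    shiftVec_dotProduct_walkVec_one G huv]
  ring

variable (u v) in
theorem realAdjMatrix_mul_privateVec_dotProduct_one_le (x y : V) :
    realAdjMatrix G x y * (privateVec G u v ⬝ᵥ 1) ≤ privateVec G u v ⬝ᵥ walkVec G 1 := by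
  have degree_pos : privateVec G u v ⬝ᵥ 1 ≤ privateVec G u v ⬝ᵥ walkVec G 1 := by
    refine sum_le_sum fun w _ ↦ ?_
    by_cases hw : w ∈ privateNeighbors G u v
    · refine mul_le_mul_of_nonneg_left ?_ (privateVec_nonneg G w)
      exact (realAdjMatrix_of_adj hw.1.symm).ge.trans (realAdjMatrix_le_walkVec_one G w u)
    · simp [privateVec, hw]
  refine le_trans (mul_le_of_le_one_left ?_ (realAdjMatrix_le_one G x y)) degree_pos
  exact dotProduct_nonneg_of_nonneg (privateVec_nonneg G) zero_le_one

theorem walkCount4_le_walkCount4_kelmansShift {V : Type*} [Finite V] (G : SimpleGraph V)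
    {u v : V} (huv : u ≠ v) :
    walkCount4 G ≤ walkCount4 (kelmansShift G u v) := by
  have := Fintype.ofFinite V
  set p := privateVec G u v with hp
  set q := privateVec G v u with hq
  set ε := realAdjMatrix G u v with hε
  set s := p ⬝ᵥ walkVec G 1 - ε * (p ⬝ᵥ 1) with hs
  set x := walkVec G 2 + ((p ⬝ᵥ 1) • q + (q ⬝ᵥ 1) • p) with hx
  have walkVec_le (w : V) : walkVec G 2 w ≤ x w := by
    have hp₀ := privateVec_nonneg G (u := u) (v := v)
    have hq₀ := privateVec_nonneg G (u := v) (v := u)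
    have hP : 0 ≤ p ⬝ᵥ 1 := dotProduct_nonneg_of_nonneg hp₀ zero_le_one
    have hQ : 0 ≤ q ⬝ᵥ 1 := dotProduct_nonneg_of_nonneg hq₀ zero_le_one
    exact le_add_of_nonneg_right (add_nonneg (mul_nonneg hP (hq₀ w)) (mul_nonneg hQ (hp₀ w)))
  have shift_gain : s + shiftVec u v ⬝ᵥ x = q ⬝ᵥ walkVec G 1 - ε * (q ⬝ᵥ 1) := by
    rw [hx, dotProduct_add, dotProduct_add, dotProduct_smul, dotProduct_smul,
      shiftVec_dotProduct_privateVec, shiftVec_dotProduct_privateVec_swap,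
      shiftVec_dotProduct_walkVec_succ G huv, shiftVec_dotProduct_walkVec_one G huv]
    simp only [← hp, ← hq, ← hε, hs, smul_eq_mul]
    ring
  have hs₀ : 0 ≤ s := sub_nonneg.2 (realAdjMatrix_mul_privateVec_dotProduct_one_le G u v u v)
  have ht₀ : 0 ≤ s + shiftVec u v ⬝ᵥ x := by
    rw [shift_gain]
    exact sub_nonneg.2 (realAdjMatrix_mul_privateVec_dotProduct_one_le G v u u v)
  have : (walkCount4 G : ℝ) ≤ walkCount4 (kelmansShift G u v) := calc
    (walkCount4 G : ℝ) = walkVec G 2 ⬝ᵥ walkVec G 2 := walkCount4_eq_dotProduct G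
    _ ≤ x ⬝ᵥ x := sum_le_sum fun w _ ↦ mul_self_le_mul_self (walkVec_nonneg G 2 w) (walkVec_le w)
    _ ≤ x ⬝ᵥ x + 2 * s * (s + shiftVec u v ⬝ᵥ x) := le_add_of_nonneg_right (by positivity)
    _ = walkCount4 (kelmansShift G u v) := by
      rw [walkCount4_eq_dotProduct, walkVec_two_kelmansShift G huv,
        add_smul_shiftVec_dotProduct_self huv]
  exact_mod_cast this

theorem privateVec_dotProduct_one_pos (h : (privateNeighbors G u v).Nonempty) :
    0 < privateVec G u v ⬝ᵥ 1 := by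
  obtain ⟨w, hw⟩ := h
  rw [dotProduct_one]
  exact sum_pos' (fun w _ ↦ privateVec_nonneg G w) ⟨w, mem_univ w, by simp [privateVec, hw]⟩

theorem exists_nested_neighborhoods_walkCount4_le :
    ∃ H : SimpleGraph V, ∑ x, walkVec H 1 x = ∑ x, walkVec G 1 x ∧
      walkCount4 G ≤ walkCount4 H ∧
      ∀ u v, privateNeighbors H u v = ∅ ∨ privateNeighbors H v u = ∅ := by
  obtain ⟨H, ⟨hsum, hwalk⟩, hmax⟩ := Set.exists_max_image
    {H : SimpleGraph V | ∑ x, walkVec H 1 x = ∑ x, walkVec G 1 x ∧ walkCount4 G ≤ walkCount4 H}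
    (fun H ↦ walkVec H 1 ⬝ᵥ walkVec H 1) (Set.toFinite _) ⟨G, rfl, le_rfl⟩
  refine ⟨H, hsum, hwalk, fun u v ↦ ?_⟩
  by_contra! hne
  have huv : u ≠ v := by
    rintro rfl
    obtain ⟨w, huw, -, hvw⟩ := hne.1
    exact hvw huw
  have hle := hmax (kelmansShift H u v) ⟨(sum_walkVec_one_kelmansShift H huv).trans hsum,
    hwalk.trans (walkCount4_le_walkCount4_kelmansShift H huv)⟩
  rw [dotProduct_walkVec_one_kelmansShift H huv] at hle
  have hpos := mul_pos (privateVec_dotProduct_one_pos H hne.1)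
    (privateVec_dotProduct_one_pos H hne.2)
  linarith

end KelmansShift

section BlowUp

variable {V : Type*} [Fintype V] (G : SimpleGraph V) (W : Type*) [Fintype W]

theorem walkVec_comap_fst (k : ℕ) (x : V × W) :
    walkVec (G.comap Prod.fst) k x = (Fintype.card W : ℝ) ^ k * walkVec G k x.1 := by
  induction k generalizing x with
  | zero => simp [walkVec]
  | succ k ih =>
    have adj_fst (y : V × W) :
        realAdjMatrix (G.comap Prod.fst) x y = realAdjMatrix G x.1 y.1 := by
      simp only [realAdjMatrix, SimpleGraph.adjMatrix_apply, SimpleGraph.comap_adj]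
      congr
    simp only [walkVec_succ_apply, ih, adj_fst, Fintype.sum_prod_type, sum_const, card_univ,
      nsmul_eq_mul, mul_sum]
    exact sum_congr rfl fun w _ ↦ by ring

theorem sum_walkVec_comap_fst (k : ℕ) :
    ∑ x, walkVec (G.comap (Prod.fst : V × W → V)) k x =
      (Fintype.card W : ℝ) ^ (k + 1) * ∑ v, walkVec G k v := by
  simp only [walkVec_comap_fst, Fintype.sum_prod_type, sum_const, card_univ, nsmul_eq_mul, mul_sum]
  exact sum_congr rfl fun v _ ↦ by ring

theorem walkCount4_comap_fst {V : Type*} [Finite V] (G : SimpleGraph V) (W : Type*) [Fintype W] :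
    (walkCount4 (G.comap (Prod.fst : V × W → V)) : ℝ) =
      (Fintype.card W : ℝ) ^ 5 * walkCount4 G := by
  have := Fintype.ofFinite V
  simp only [walkCount4_eq_one_dotProduct, one_dotProduct, sum_walkVec_comap_fst]

end BlowUp

section WalkBound

theorem quadratic_nonpos_of_mem_Icc {α β γ l u x : ℝ} (hα : 0 ≤ α)
    (hl : α * l ^ 2 + β * l + γ ≤ 0) (hu : α * u ^ 2 + β * u + γ ≤ 0) (hx : x ∈ Set.Icc l u) :
    α * x ^ 2 + β * x + γ ≤ 0 := by
  have convex : ConvexOn ℝ Set.univ fun z : ℝ ↦ α * z ^ 2 + β * z + γ :=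
    (((even_two.convexOn_pow).smul hα).add
      ((LinearMap.mul ℝ ℝ β).convexOn convex_univ)).add_const γ
  exact (convex.le_max_of_mem_Icc trivial trivial hx).trans (max_le hl hu)

/-- The bound of the theorem as a function of the edge density. The two branches are the walk
densities of the quasi-star (a clique joined to everything else) and of the quasi-clique (a clique
and isolated vertices). -/
noncomputable def walkBound (c : ℝ) : ℝ :=
  max ((1 - √(1 - c)) ^ 2 * ((c + 1) * √(1 - c) + c)) (c ^ ((5 : ℝ) / 2))

/-- The walk density of the quasi-star of edge density `c` whose clique has density `x`. -/
noncomputable def quasiStarValue (c x : ℝ) : ℝ := x ^ 2 * ((c + 1) * (1 - x) + c)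

/-- The value of `a c² + r L` for a split graph when `L` is the slope required at the kink `y`. -/
noncomputable def kinkValue (a c r y : ℝ) : ℝ := a * c ^ 2 + r * (y - (2 * c - r) * (a - y))

/-- The value of `a c² + r L` for a split graph when `L` is the slope required at the full degree
`a`. -/
noncomputable def fullValue (a c r : ℝ) : ℝ := a * c ^ 2 + r * ((a ^ 2 + r) ^ 2 / a)

variable {a c q r t x y : ℝ}

theorem quasiStarValue_le_walkBound (hx : x ≤ 1) (hcx : c = 2 * x - x ^ 2) :
    quasiStarValue c x ≤ walkBound c := by
  have sqrt_eq : √(1 - c) = 1 - x := by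
    rw [show 1 - c = (1 - x) ^ 2 by rw [hcx]; ring, Real.sqrt_sq (sub_nonneg.2 hx)]
  rw [quasiStarValue, walkBound, sqrt_eq, sub_sub_cancel]
  exact le_max_left _ _

theorem pow_five_le_walkBound (hq : 0 ≤ q) (hcq : c = q ^ 2) : q ^ 5 ≤ walkBound c := by
  have rpow_eq : c ^ ((5 : ℝ) / 2) = q ^ 5 := by
    rw [hcq, ← Real.rpow_natCast_mul hq]
    norm_num
  rw [walkBound, rpow_eq]
  exact le_max_right _ _

theorem continuous_walkBound : Continuous walkBound := by
  unfold walkBound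
  exact Continuous.max (by fun_prop) (Real.continuous_rpow_const (by norm_num))

theorem kinkValue_le_quasiStarValue (hy : 0 ≤ y) (ha : a ≤ 1) (hr : r = y * (1 - a))
    (hc : c = a ^ 2 + 2 * r) (hcx : c = 2 * x - x ^ 2) (hyx : y ≤ x)
    (h : (a + x) * (4 * x + a ^ 2 - x ^ 2) ≤ 2 * x) :
    kinkValue a c r y ≤ quasiStarValue c x := by
  have hr₀ : 0 ≤ r := hr ▸ mul_nonneg hy (sub_nonneg.2 ha)
  have hκ : 0 ≤ 2 * c - r := by nlinarith [sq_nonneg a]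
  have slope_le : y - (2 * c - r) * (a - y) ≤ x - (2 * c - r) * (a - x) := by
    linarith [mul_le_mul_of_nonneg_left hyx hκ]
  have r_eq : r = x * (1 - a) - (a - x) ^ 2 / 2 := by linear_combination (hcx - hc) / 2
  calc a * c ^ 2 + r * (y - (2 * c - r) * (a - y))
      ≤ a * c ^ 2 + r * (x - (2 * c - r) * (a - x)) := by gcongr
    _ = quasiStarValue c x
        - (a - x) ^ 2 * (2 * x - (a + x) * (4 * x + a ^ 2 - x ^ 2)) / 4 := by
      rw [quasiStarValue, r_eq, hcx]
      ring
    _ ≤ quasiStarValue c x := by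
      have := mul_nonneg (sq_nonneg (a - x)) (sub_nonneg.2 h)
      linarith

theorem kinkValue_le_pow_five (ha : a < 1) (hr : r = y * (1 - a)) (hc : c = a ^ 2 + 2 * r)
    (hcq : c = q ^ 2) (haq : a = q * t) (ht : t ≤ 1)
    (h : (1 - t) * (1 + t) ^ 2 * (1 + q ^ 2 * (3 + t ^ 2) / 2) ≤
      (4 + 3 * t + 3 * t ^ 2 + t ^ 3 + t ^ 4) * q * (1 - q * t)) :
    kinkValue a c r y ≤ q ^ 5 := by
  have r_eq : r = (q ^ 2 - (q * t) ^ 2) / 2 := by rw [← haq]; linarith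
  have gap_eq : (1 - a) * (q ^ 5 - kinkValue a c r y) =
      q ^ 4 * (1 - t) / 4 * ((4 + 3 * t + 3 * t ^ 2 + t ^ 3 + t ^ 4) * q * (1 - q * t)
        - (1 - t) * (1 + t) ^ 2 * (1 + q ^ 2 * (3 + t ^ 2) / 2)) := by
    calc (1 - a) * (q ^ 5 - kinkValue a c r y)
        = (1 - a) * (q ^ 5 - a * c ^ 2) - r * (r - (2 * c - r) * (a * (1 - a) - r)) := by
          rw [kinkValue, hr]
          ring
      _ = _ := by
          rw [r_eq, hcq, haq]
          ring
  have gap_nonneg := gap_eq.ge.trans' (mul_nonneg (by have := sub_nonneg.2 ht; positivity)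
    (sub_nonneg.2 h))
  exact sub_nonneg.1 (nonneg_of_mul_nonneg_right gap_nonneg (sub_pos.2 ha))

theorem quasiClique_criterion_of_three_tenths_le (ht : t ∈ Set.Icc 0 1)
    (hq : q ∈ Set.Icc (3 / 10) 1) :
    (1 - t) * (1 + t) ^ 2 * (1 + q ^ 2 * (3 + t ^ 2) / 2) ≤
      (4 + 3 * t + 3 * t ^ 2 + t ^ 3 + t ^ 4) * q * (1 - q * t) := by
  obtain ⟨ht₀, ht₁⟩ := ht
  have ht' := sub_nonneg.2 ht₁
  set α := (1 - t) * (1 + t) ^ 2 * (3 + t ^ 2) / 2 + (4 + 3 * t + 3 * t ^ 2 + t ^ 3 + t ^ 4) * t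
    with hα
  have hα₀ : 0 ≤ α := by positivity
  have at_one : α * 1 ^ 2 + -(4 + 3 * t + 3 * t ^ 2 + t ^ 3 + t ^ 4) * 1
      + (1 - t) * (1 + t) ^ 2 ≤ 0 := by
    have : 0 ≤ (1 - t) ^ 3 * (3 + 2 * t + t ^ 2) / 2 := by positivity
    linear_combination this
  have at_three_tenths : α * (3 / 10) ^ 2 + -(4 + 3 * t + 3 * t ^ 2 + t ^ 3 + t ^ 4) * (3 / 10)
      + (1 - t) * (1 + t) ^ 2 ≤ 0 := by
    nlinarith [sq_nonneg (t - 1 / 5), sq_nonneg (t ^ 2), sq_nonneg (t ^ 3), mul_nonneg ht₀ ht',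
      pow_nonneg ht₀ 3]
  linear_combination quadratic_nonpos_of_mem_Icc hα₀ at_three_tenths at_one hq

theorem quasiClique_criterion_of_nine_tenths_le (ht : t ∈ Set.Icc (9 / 10) 1)
    (hq : q ∈ Set.Icc (27 / 100) (3 / 10)) :
    (1 - t) * (1 + t) ^ 2 * (1 + q ^ 2 * (3 + t ^ 2) / 2) ≤
      (4 + 3 * t + 3 * t ^ 2 + t ^ 3 + t ^ 4) * q * (1 - q * t) := by
  obtain ⟨ht₀, ht₁⟩ := ht
  obtain ⟨hq₀, hq₁⟩ := hq
  calc (1 - t) * (1 + t) ^ 2 * (1 + q ^ 2 * (3 + t ^ 2) / 2)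
      ≤ 1 / 10 * (1 + 1) ^ 2 * (1 + (3 / 10) ^ 2 * (3 + 1 ^ 2) / 2) := by
        gcongr; linarith
    _ ≤ (4 + 3 * (9 / 10) + 3 * (9 / 10) ^ 2 + (9 / 10) ^ 3 + (9 / 10) ^ 4) * (27 / 100) *
        (1 - 3 / 10 * 1) := by norm_num
    _ ≤ (4 + 3 * t + 3 * t ^ 2 + t ^ 3 + t ^ 4) * q * (1 - q * t) := by
        gcongr

theorem kinkValue_le_walkBound (hy : 0 ≤ y) (ha₀ : 0 < a) (ha₁ : a < 1) (hr : r = y * (1 - a))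
    (hc : c = a ^ 2 + 2 * r) (hcx : c = 2 * x - x ^ 2) (hx : x ≤ a) (hyx : y ≤ x)
    (hq : 0 ≤ q) (hcq : c = q ^ 2) :
    kinkValue a c r y ≤ walkBound c := by
  have hr₀ : 0 ≤ r := hr ▸ mul_nonneg hy (sub_nonneg.2 ha₁.le)
  have haq : a ≤ q := le_of_sq_le_sq (by linarith) hq
  have hq₁ : q ≤ 1 := by nlinarith
  have haq' : a = q * (a / q) := by field [(ha₀.trans_le haq).ne']
  have ht : a / q ≤ 1 := div_le_one_of_le₀ haq hq
  have clique (h) := (kinkValue_le_pow_five ha₁ hr hc hcq haq' ht h).trans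
    (pow_five_le_walkBound hq hcq)
  -- Only for small `q` and `a` can the kink beat the quasi-clique; there the quasi-star wins.
  rcases le_total (3 / 10) q with hq₃ | hq₃
  · exact clique (quasiClique_criterion_of_three_tenths_le ⟨by positivity, ht⟩ ⟨hq₃, hq₁⟩)
  rcases le_total (27 / 100) a with ha | ha
  · refine clique (quasiClique_criterion_of_nine_tenths_le ⟨?_, ht⟩ ⟨ha.trans haq, hq₃⟩)
    rw [le_div_iff₀ (ha₀.trans_le haq)]
    linarith
  · have hx₀ : x ≤ 1 / 20 := by nlinarith
    have criterion : (a + x) * (4 * x + a ^ 2 - x ^ 2) ≤ 2 * x := by nlinarith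
    exact (kinkValue_le_quasiStarValue hy ha₁.le hr hc hcx hyx criterion).trans
      (quasiStarValue_le_walkBound (hx.trans ha₁.le) hcx)

/-- `fullValue` in units of the quasi-clique density `q ^ 5`, where `c = q ^ 2`, as a function of
the relative clique size `t = a / q`. -/
noncomputable def splitProfile (t : ℝ) : ℝ :=
  9 * t / 8 + 1 / (8 * t) - t ^ 3 / 8 - t ^ 5 / 8

theorem splitProfile_le_one (ht : 1 / 5 ≤ t) : splitProfile t ≤ 1 := by
  have ht₀ : 0 < t := by linarith
  have gap_eq : 1 - splitProfile t =
      (1 - t) ^ 2 * (t ^ 4 + 2 * t ^ 3 + 4 * t ^ 2 + (6 * t - 1)) / (8 * t) := by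
    rw [splitProfile]
    field
  have : 0 ≤ 6 * t - 1 := by linarith
  exact sub_nonneg.1 (gap_eq.ge.trans' (by positivity))

theorem splitProfile_antitoneOn : AntitoneOn splitProfile (Set.Ioc 0 (1 / 3)) := by
  rintro s ⟨hs₀, hs⟩ t ⟨ht₀, ht⟩ hst
  have main_eq : 9 * s / 8 + 1 / (8 * s) - (9 * t / 8 + 1 / (8 * t)) =
      (t - s) * (1 - 9 * (s * t)) / (8 * t * s) := by field
  have main_nonneg : 0 ≤ 9 * s / 8 + 1 / (8 * s) - (9 * t / 8 + 1 / (8 * t)) := by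
    have : s * t ≤ 1 / 3 * (1 / 3) := by gcongr
    refine main_eq.ge.trans' (div_nonneg (mul_nonneg ?_ ?_) (by positivity)) <;> linarith
  have : s ^ 3 ≤ t ^ 3 := by gcongr
  have : s ^ 5 ≤ t ^ 5 := by gcongr
  simp only [splitProfile]
  linarith

theorem fullValue_eq_splitProfile (ha : a ≠ 0) (hq : q ≠ 0) (hc : c = a ^ 2 + 2 * r)
    (hcq : c = q ^ 2) :
    fullValue a c r = q ^ 5 * splitProfile (a / q) := by
  rw [show r = (q ^ 2 - a ^ 2) / 2 by linarith, hcq, fullValue, splitProfile]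
  field

theorem quasiStarValue_eq_splitProfile (hx : x ≠ 0) (hq : q ≠ 0) (hcx : c = 2 * x - x ^ 2)
    (hcq : c = q ^ 2) :
    quasiStarValue c x = q ^ 5 * splitProfile (x / q) := by
  rw [← fullValue_eq_splitProfile (r := x * (1 - x)) hx hq (by linarith) hcq, hcx, quasiStarValue,
    fullValue]
  field

theorem fullValue_le_walkBound (ha₁ : a ≤ 1) (hc : c = a ^ 2 + 2 * r)
    (hcx : c = 2 * x - x ^ 2) (hx₀ : 0 < x) (hx : x ≤ a) (hq : 0 < q) (hcq : c = q ^ 2) :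
    fullValue a c r ≤ walkBound c := by
  rw [fullValue_eq_splitProfile (hx₀.trans_le hx).ne' hq.ne' hc hcq]
  rcases le_total (1 / 5) (a / q) with h | h
  · calc q ^ 5 * splitProfile (a / q) ≤ q ^ 5 :=
        mul_le_of_le_one_right (by positivity) (splitProfile_le_one h)
      _ ≤ walkBound c := pow_five_le_walkBound hq.le hcq
  · have hxa : x / q ≤ a / q := by gcongr
    have hxq : 0 < x / q := by positivity
    calc q ^ 5 * splitProfile (a / q) ≤ q ^ 5 * splitProfile (x / q) := by
          gcongr
          exact splitProfile_antitoneOn ⟨hxq, by linarith⟩ ⟨by linarith, by linarith⟩ hxa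
      _ = quasiStarValue c x := (quasiStarValue_eq_splitProfile hx₀.ne' hq.ne' hcx hcq).symm
      _ ≤ walkBound c := quasiStarValue_le_walkBound (hx.trans ha₁) hcx

theorem exists_quasiStar_parameter (hya : y ≤ a) (ha₁ : a < 1)
    (hc : c = a ^ 2 + 2 * (y * (1 - a))) : ∃ x, c = 2 * x - x ^ 2 ∧ x ≤ a ∧ y ≤ x := by
  have h : (1 - a) ^ 2 ≤ 1 - c := by nlinarith
  have hcx : c = 2 * (1 - √(1 - c)) - (1 - √(1 - c)) ^ 2 := by
    linear_combination Real.sq_sqrt ((sq_nonneg _).trans h)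
  refine ⟨1 - √(1 - c), hcx, by linarith [Real.le_sqrt_of_sq_le h], ?_⟩
  generalize 1 - √(1 - c) = x at hcx
  have : 0 ≤ (1 - a) * (2 * (x - y)) :=
    (sq_nonneg (a - x)).trans_eq (by linear_combination hcx - hc)
  linarith [nonneg_of_mul_nonneg_right this (sub_pos.2 ha₁)]

theorem exists_slope_bound (ha₀ : 0 ≤ a) (ha₁ : a ≤ 1) (hr₀ : 0 ≤ r) (hr : r ≤ a * (1 - a))
    (hc : c = a ^ 2 + 2 * r) : ∃ y L, 0 ≤ y ∧ r = y * (1 - a) ∧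
      y - (2 * c - r) * (a - y) ≤ L ∧ (a ^ 2 + r) ^ 2 ≤ a * L ∧
      a * c ^ 2 + r * L ≤ walkBound c := by
  rcases hr₀.eq_or_lt with rfl | hr₀
  · obtain rfl : c = a ^ 2 := by linarith
    refine ⟨0, a ^ 3, le_rfl, (zero_mul _).symm, ?_, by ring_nf; rfl, ?_⟩
    · have : 0 ≤ a ^ 3 := by positivity
      linarith
    · convert pow_five_le_walkBound ha₀ rfl using 1
      ring
  · replace ha₀ : 0 < a := ha₀.lt_of_ne' (by rintro rfl; linarith)
    replace ha₁ : a < 1 := ha₁.lt_of_ne (by rintro rfl; linarith)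
    have ha' := sub_pos.2 ha₁
    obtain ⟨y, rfl⟩ : ∃ y, r = y * (1 - a) := ⟨r / (1 - a), by field⟩
    have hy₀ : 0 < y := pos_of_mul_pos_left hr₀ ha'.le
    obtain ⟨x, hcx, hxa, hyx⟩ :=
      exists_quasiStar_parameter (le_of_mul_le_mul_right hr ha') ha₁ hc
    have hc₀ : 0 < c := hc ▸ by positivity
    have hcq := (Real.sq_sqrt hc₀.le).symm
    have kink := kinkValue_le_walkBound hy₀.le ha₀ ha₁ rfl hc hcx hxa hyx (Real.sqrt_nonneg c) hcq
    have full := fullValue_le_walkBound ha₁.le hc hcx (hy₀.trans_le hyx) hxa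
      (Real.sqrt_pos.2 hc₀) hcq
    refine ⟨y, max _ _, hy₀.le, rfl, le_max_left _ ((a ^ 2 + y * (1 - a)) ^ 2 / a),
      (div_le_iff₀' ha₀).1 (le_max_right _ _), ?_⟩
    rw [mul_max_of_nonneg _ _ hr₀.le, ← max_add_add_left]
    exact max_le kink full

theorem exists_slope_bound_scaled {n p R C : ℝ} (hn : 0 < n) (hp₀ : 0 ≤ p) (hp : p ≤ n)
    (hR₀ : 0 ≤ R) (hR : R ≤ p * (n - p)) (hC : C = p ^ 2 + 2 * R) :
    ∃ y L, 0 ≤ y ∧ R = y * (n - p) ∧ n ^ 2 * y - (2 * C - R) * (p - y) ≤ L ∧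
      (p ^ 2 + R) ^ 2 ≤ p * L ∧ p * C ^ 2 + R * L ≤ n ^ 5 * walkBound (C / n ^ 2) := by
  obtain ⟨y, L, hy, hr, kink, full, total⟩ := exists_slope_bound (a := p / n) (r := R / n ^ 2)
    (c := C / n ^ 2) (by positivity) (div_le_one_of_le₀ hp hn.le) (by positivity)
    ((div_le_div_of_nonneg_right hR (sq_nonneg n)).trans_eq (by field)) (by rw [hC]; field)
  refine ⟨n * y, n ^ 3 * L, by positivity, ?_, ?_, ?_, ?_⟩
  · calc R = n ^ 2 * (R / n ^ 2) := by field
      _ = n * y * (n - p) := by rw [hr]; field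
  · refine Eq.trans_le ?_
      ((mul_le_mul_of_nonneg_left kink (pow_nonneg hn.le 3)).trans_eq ?_) <;> field
  · refine Eq.trans_le ?_
      ((mul_le_mul_of_nonneg_left full (pow_nonneg hn.le 4)).trans_eq ?_) <;> field
  · refine Eq.trans_le ?_
      ((mul_le_mul_of_nonneg_left total (pow_nonneg hn.le 5)).trans_eq ?_) <;> field

theorem sq_le_mul_sub_add_mul_slope {n p R κ y L m g : ℝ} (hκ : 0 ≤ κ) (hy : 0 ≤ y)
    (hR : R = y * (n - p)) (kink : n ^ 2 * y - κ * (p - y) ≤ L) (full : (p ^ 2 + R) ^ 2 ≤ p * L)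
    (hm : m ∈ Set.Icc 0 p) (hg₀ : 0 ≤ g) (hg : g ≤ n * m) (hg' : g ≤ p * m + R) :
    g ^ 2 ≤ κ * (m * (p - m)) + m * L := by
  have kink_mul : y * (n ^ 2 * y - κ * (p - y)) ≤ y * L := mul_le_mul_of_nonneg_left kink hy
  rcases le_total m y with hmy | hmy
  · have : (n ^ 2 + κ) * m ^ 2 + (-(κ * p) - L) * m + 0 ≤ 0 :=
      quadratic_nonpos_of_mem_Icc (by positivity) (by simp) (by linarith) ⟨hm.1, hmy⟩
    have : g ^ 2 ≤ (n * m) ^ 2 := by gcongr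
    linarith
  · have : (p ^ 2 + κ) * m ^ 2 + (2 * p * R - κ * p - L) * m + R ^ 2 ≤ 0 := by
      refine quadratic_nonpos_of_mem_Icc (by positivity) ?_ ?_ ⟨hmy, hm.2⟩
      · rw [hR]
        linarith
      · linarith
    have : g ^ 2 ≤ (p * m + R) ^ 2 := by gcongr
    linarith

end WalkBound

section SplitGraph

variable {V : Type*}

/-- `A` exhibits `G` as a split graph: it is a clique and its complement is independent. -/
structure IsSplitBy (G : SimpleGraph V) (A : Set V) : Prop where
  isClique : G.IsClique A
  isIndepSet : G.IsIndepSet Aᶜ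

theorem exists_isSplitBy_of_nested {G : SimpleGraph V}
    (nested : ∀ u v, privateNeighbors G u v = ∅ ∨ privateNeighbors G v u = ∅) :
    ∃ A, IsSplitBy G A := by
  have adj_of_nested {u v w : V} (h : privateNeighbors G u v = ∅) (huw : G.Adj u w)
      (hwv : w ≠ v) : G.Adj v w := by
    by_contra hvw
    exact (h ▸ ⟨huw, hwv, hvw⟩ : w ∈ (∅ : Set V))
  refine ⟨{v | ∀ w, v ≠ w → privateNeighbors G v w = ∅ → G.Adj v w}, fun u hu v hv huv ↦ ?_,
    fun u hu v hv huv hadj ↦ ?_⟩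
  · rcases nested u v with h | h
    · exact hu v huv h
    · exact (hv u huv.symm h).symm
  · wlog h : privateNeighbors G u v = ∅ generalizing u v
    · exact this v hv u hu huv.symm hadj.symm ((nested v u).resolve_right h)
    obtain ⟨w, hvw, hvw', hnadj⟩ : ∃ w, v ≠ w ∧ privateNeighbors G v w = ∅ ∧ ¬ G.Adj v w := by
      simpa using hv
    by_cases hwu : w = u
    · exact hnadj (hwu ▸ hadj.symm)
    · exact hnadj (adj_of_nested h (adj_of_nested hvw' hadj.symm (Ne.symm hwu)).symm hvw.symm)

namespace IsSplitBy

variable [Fintype V] {G : SimpleGraph V} {A : Finset V} (h : IsSplitBy G A) {v : V}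
include h

theorem walkVec_succ_of_notMem (hv : v ∉ A) (k : ℕ) :
    walkVec G (k + 1) v = ∑ w ∈ A, realAdjMatrix G v w * walkVec G k w := by
  classical
  rw [walkVec_succ_apply, ← sum_add_sum_compl A, add_eq_left]
  refine sum_eq_zero fun w hw ↦ mul_eq_zero_of_left (realAdjMatrix_of_not_adj fun hvw ↦ ?_) _
  exact h.isIndepSet hv (mem_compl.1 hw) hvw.ne hvw

theorem walkVec_one_of_notMem (hv : v ∉ A) : walkVec G 1 v = ∑ w ∈ A, realAdjMatrix G v w := by
  simpa only [walkVec, Pi.one_apply, mul_one] using h.walkVec_succ_of_notMem hv 0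

theorem walkVec_one_le_of_notMem (hv : v ∉ A) : walkVec G 1 v ≤ #A := by
  rw [h.walkVec_one_of_notMem hv, ← nsmul_one]
  exact sum_le_card_nsmul _ _ _ fun w _ ↦ realAdjMatrix_le_one G v w

theorem walkVec_two_le_card_mul (hv : v ∉ A) :
    walkVec G 2 v ≤ Fintype.card V * walkVec G 1 v := by
  rw [h.walkVec_succ_of_notMem hv, h.walkVec_one_of_notMem hv, mul_comm, sum_mul]
  exact sum_le_sum fun w _ ↦
    mul_le_mul_of_nonneg_left (walkVec_one_le_card G w) (realAdjMatrix_nonneg G v w)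

end IsSplitBy

variable [Fintype V] [DecidableEq V] (G : SimpleGraph V) (A : Finset V)

/-- The sum of the degrees of the vertices outside `A`. -/
noncomputable def outerDegreeSum : ℝ := ∑ v ∈ Aᶜ, walkVec G 1 v

/-- The sum of the degrees of the vertices outside `A` that are not adjacent to `v`: the number of
two-edge walks that `v` lacks compared with a vertex adjacent to everything outside `A`. -/
noncomputable def missingWalks (v : V) : ℝ := ∑ w ∈ Aᶜ, (1 - realAdjMatrix G v w) * walkVec G 1 w

theorem missingWalks_nonneg (v : V) : 0 ≤ missingWalks G A v :=
  sum_nonneg fun w _ ↦ mul_nonneg (sub_nonneg.2 (realAdjMatrix_le_one G v w)) (walkVec_nonneg G 1 w)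

theorem missingWalks_le_outerDegreeSum (v : V) : missingWalks G A v ≤ outerDegreeSum G A :=
  sum_le_sum fun w _ ↦ mul_le_of_le_one_left (walkVec_nonneg G 1 w)
    (sub_le_self _ (realAdjMatrix_nonneg G v w))

theorem outerDegreeSum_nonneg : 0 ≤ outerDegreeSum G A := sum_nonneg fun v _ ↦ walkVec_nonneg G 1 v

theorem sum_compl_realAdjMatrix_mul_walkVec_one (v : V) :
    ∑ w ∈ Aᶜ, realAdjMatrix G v w * walkVec G 1 w = outerDegreeSum G A - missingWalks G A v := by
  simp only [outerDegreeSum, missingWalks, sub_mul, one_mul, sum_sub_distrib, sub_sub_cancel]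

namespace IsSplitBy

variable {G A} (h : IsSplitBy G A) {v : V}
include h

theorem walkVec_one_of_mem (hv : v ∈ A) :
    walkVec G 1 v = #A - 1 + ∑ w ∈ Aᶜ, realAdjMatrix G v w := by
  have sum_clique : ∑ w ∈ A.erase v, realAdjMatrix G v w = #A - 1 := by
    rw [sum_congr rfl fun w hw ↦ realAdjMatrix_of_adj
      (h.isClique hv (mem_of_mem_erase hw) (ne_of_mem_erase hw).symm), sum_const, nsmul_one,
      cast_card_erase_of_mem hv]
  rw [walkVec_one_apply, ← sum_add_sum_compl A, ← add_sum_erase A _ hv, sum_clique,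
    realAdjMatrix_of_not_adj (G.irrefl), zero_add]

theorem sum_sum_realAdjMatrix :
    ∑ v ∈ A, ∑ w ∈ Aᶜ, realAdjMatrix G v w = outerDegreeSum G A := by
  refine sum_comm.trans (sum_congr rfl fun w hw ↦ ?_)
  simp only [h.walkVec_one_of_notMem (mem_compl.1 hw), realAdjMatrix_comm G w]

theorem sum_walkVec_one_clique :
    ∑ v ∈ A, walkVec G 1 v = (#A : ℝ) ^ 2 - #A + outerDegreeSum G A := by
  rw [sum_congr rfl fun v hv ↦ h.walkVec_one_of_mem hv, sum_add_distrib, h.sum_sum_realAdjMatrix,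
    sum_const, nsmul_eq_mul]
  ring

theorem sum_walkVec_one_add_card :
    ∑ v, walkVec G 1 v + #A = (#A : ℝ) ^ 2 + 2 * outerDegreeSum G A := by
  rw [← sum_add_sum_compl A, h.sum_walkVec_one_clique, ← outerDegreeSum]
  ring

theorem outerDegreeSum_le : outerDegreeSum G A ≤ #A * (Fintype.card V - #A) := by
  rw [mul_comm, ← Nat.cast_sub (card_le_univ A), ← card_compl, ← nsmul_eq_mul]
  exact sum_le_card_nsmul _ _ _ fun v hv ↦ h.walkVec_one_le_of_notMem (mem_compl.1 hv)

theorem sum_missingWalks :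
    ∑ v ∈ A, missingWalks G A v = ∑ w ∈ Aᶜ, walkVec G 1 w * (#A - walkVec G 1 w) := by
  simp only [missingWalks]
  rw [sum_comm]
  refine sum_congr rfl fun w hw ↦ ?_
  rw [← sum_mul, sum_sub_distrib, sum_const, nsmul_one, mul_comm,
    h.walkVec_one_of_notMem (mem_compl.1 hw)]
  simp only [realAdjMatrix_comm G w]

theorem walkVec_two_le :
    walkVec G 2 v ≤ (#A : ℝ) ^ 2 + 2 * outerDegreeSum G A - missingWalks G A v := by
  have clique_le : ∑ w ∈ A, realAdjMatrix G v w * walkVec G 1 w ≤ ∑ w ∈ A, walkVec G 1 w :=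
    sum_le_sum fun w _ ↦ mul_le_of_le_one_left (walkVec_nonneg G 1 w) (realAdjMatrix_le_one G v w)
  rw [h.sum_walkVec_one_clique] at clique_le
  rw [walkVec_succ_apply, ← sum_add_sum_compl A, sum_compl_realAdjMatrix_mul_walkVec_one]
  linarith [(#A).cast_nonneg (α := ℝ)]

theorem walkVec_two_le_of_notMem (hv : v ∉ A) :
    walkVec G 2 v ≤ #A * walkVec G 1 v + outerDegreeSum G A := by
  calc walkVec G 2 v = ∑ w ∈ A, realAdjMatrix G v w * walkVec G 1 w :=
        h.walkVec_succ_of_notMem hv 1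
    _ ≤ ∑ w ∈ A, (realAdjMatrix G v w * #A + ∑ u ∈ Aᶜ, realAdjMatrix G w u) := by
      refine sum_le_sum fun w hw ↦ ?_
      have outer_nonneg : 0 ≤ ∑ u ∈ Aᶜ, realAdjMatrix G w u :=
        sum_nonneg fun u _ ↦ realAdjMatrix_nonneg G w u
      rw [h.walkVec_one_of_mem hw]
      nlinarith [realAdjMatrix_nonneg G v w, realAdjMatrix_le_one G v w]
    _ = #A * walkVec G 1 v + outerDegreeSum G A := by
      rw [sum_add_distrib, ← sum_mul, h.sum_sum_realAdjMatrix, h.walkVec_one_of_notMem hv, mul_comm]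

theorem sum_walkVec_two_sq_clique_le {C : ℝ} (hC : C = (#A : ℝ) ^ 2 + 2 * outerDegreeSum G A) :
    ∑ v ∈ A, walkVec G 2 v ^ 2 ≤
      #A * C ^ 2 - (2 * C - outerDegreeSum G A) * ∑ v ∈ A, missingWalks G A v := by
  rw [mul_sum, ← nsmul_eq_mul, ← sum_const, ← sum_sub_distrib]
  refine sum_le_sum fun v _ ↦ ?_
  calc walkVec G 2 v ^ 2 ≤ (C - missingWalks G A v) ^ 2 :=
        pow_le_pow_left₀ (walkVec_nonneg G 2 v) (hC ▸ h.walkVec_two_le) 2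
    _ ≤ C ^ 2 - (2 * C - outerDegreeSum G A) * missingWalks G A v := by
      have := mul_nonneg (missingWalks_nonneg G A v)
        (sub_nonneg.2 (missingWalks_le_outerDegreeSum G A v))
      linarith

theorem walkCount4_le [Nonempty V] :
    (walkCount4 G : ℝ) ≤ (Fintype.card V : ℝ) ^ 5 *
      walkBound (((#A : ℝ) ^ 2 + 2 * outerDegreeSum G A) / (Fintype.card V : ℝ) ^ 2) := by
  set n := (Fintype.card V : ℝ)
  set p := (#A : ℝ)
  set R := outerDegreeSum G A with hR
  set C := p ^ 2 + 2 * R with hC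
  have hR₀ : 0 ≤ R := outerDegreeSum_nonneg G A
  have hκ : 0 ≤ 2 * C - R := by linarith [sq_nonneg p]
  obtain ⟨y, L, hy, hRy, kink, full, total⟩ := exists_slope_bound_scaled (n := n) (p := p)
    (Nat.cast_pos.2 Fintype.card_pos) (Nat.cast_nonneg _) (Nat.cast_le.2 (card_le_univ A)) hR₀
    h.outerDegreeSum_le hC
  have indep_le : ∑ v ∈ Aᶜ, walkVec G 2 v ^ 2 ≤
      (2 * C - R) * ∑ v ∈ Aᶜ, walkVec G 1 v * (p - walkVec G 1 v) + R * L := by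
    rw [hR, outerDegreeSum, mul_sum, sum_mul, ← sum_add_distrib]
    refine sum_le_sum fun v hv ↦ ?_
    rw [mem_compl] at hv
    exact sq_le_mul_sub_add_mul_slope hκ hy hRy kink full
      ⟨walkVec_nonneg G 1 v, h.walkVec_one_le_of_notMem hv⟩ (walkVec_nonneg G 2 v)
      (h.walkVec_two_le_card_mul hv) (h.walkVec_two_le_of_notMem hv)
  calc (walkCount4 G : ℝ) = ∑ v ∈ A, walkVec G 2 v ^ 2 + ∑ v ∈ Aᶜ, walkVec G 2 v ^ 2 := by
        simp only [walkCount4_eq_dotProduct, dotProduct, sum_add_sum_compl, sq]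
    _ ≤ p * C ^ 2 + R * L := by
      have clique_le := h.sum_walkVec_two_sq_clique_le hC
      rw [h.sum_missingWalks] at clique_le
      linarith
    _ ≤ n ^ 5 * walkBound (C / n ^ 2) := total

end IsSplitBy

end SplitGraph

section Limit

variable {V : Type*} [Fintype V] [Nonempty V] (G : SimpleGraph V)

theorem exists_density_near_walkCount4_le :
    ∃ c, c * (Fintype.card V : ℝ) ^ 2 ∈
        Set.Icc (∑ v, walkVec G 1 v) (∑ v, walkVec G 1 v + Fintype.card V) ∧
      (walkCount4 G : ℝ) ≤ (Fintype.card V : ℝ) ^ 5 * walkBound c := by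
  classical
  obtain ⟨H, hsum, hwalk, nested⟩ := exists_nested_neighborhoods_walkCount4_le G
  obtain ⟨A, hA⟩ := exists_isSplitBy_of_nested nested
  lift A to Finset V using A.toFinite
  refine ⟨_, ?_, (Nat.cast_le.2 hwalk).trans hA.walkCount4_le⟩
  have card_pos : (0 : ℝ) < Fintype.card V := Nat.cast_pos.2 Fintype.card_pos
  have card_le : (#A : ℝ) ≤ Fintype.card V := Nat.cast_le.2 (card_le_univ A)
  rw [div_mul_cancel₀ _ (pow_ne_zero 2 card_pos.ne'), ← hA.sum_walkVec_one_add_card, hsum]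
  exact ⟨le_add_of_nonneg_right (Nat.cast_nonneg _), by gcongr⟩

theorem exists_density_near_walkCount4_le_of_blowUp (k : ℕ) :
    ∃ c, c * (Fintype.card V : ℝ) ^ 2 ∈ Set.Icc (∑ v, walkVec G 1 v)
        (∑ v, walkVec G 1 v + Fintype.card V * (1 / ((k : ℝ) + 1))) ∧
      (walkCount4 G : ℝ) ≤ (Fintype.card V : ℝ) ^ 5 * walkBound c := by
  obtain ⟨c, ⟨hc, hc'⟩, hwalk⟩ :=
    exists_density_near_walkCount4_le (G.comap (Prod.fst : V × Fin (k + 1) → V))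
  simp only [sum_walkVec_comap_fst, walkCount4_comap_fst, Fintype.card_prod, Fintype.card_fin,
    Nat.cast_mul, Nat.cast_add_one, one_add_one_eq_two] at hc hc' hwalk
  have hk : 0 < (k : ℝ) + 1 := by positivity
  refine ⟨c, ⟨?_, ?_⟩, ?_⟩
  · refine le_of_mul_le_mul_left ?_ (pow_pos hk 2)
    linarith
  · refine le_of_mul_le_mul_left ?_ (pow_pos hk 2)
    refine Eq.trans_le ?_ (hc'.trans_eq ?_) <;> field
  · refine le_of_mul_le_mul_left ?_ (pow_pos hk 5)
    linarith

theorem walkCount4_le_walkBound :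
    (walkCount4 G : ℝ) ≤ (Fintype.card V : ℝ) ^ 5 *
      walkBound ((∑ v, walkVec G 1 v) / (Fintype.card V : ℝ) ^ 2) := by
  have card_pos : (0 : ℝ) < (Fintype.card V : ℝ) ^ 2 :=
    pow_pos (Nat.cast_pos.2 Fintype.card_pos) 2
  choose c hc hwalk using exists_density_near_walkCount4_le_of_blowUp G
  have tendsto_mul : Tendsto (fun k ↦ c k * (Fintype.card V : ℝ) ^ 2) atTop
      (𝓝 (∑ v, walkVec G 1 v)) := by
    refine tendsto_of_tendsto_of_tendsto_of_le_of_le tendsto_const_nhds ?_ (fun k ↦ (hc k).1)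
      fun k ↦ (hc k).2
    simpa using (tendsto_one_div_add_atTop_nhds_zero_nat.const_mul (Fintype.card V : ℝ)).const_add
      (∑ v, walkVec G 1 v)
  have tendsto_c := (tendsto_mul.div_const ((Fintype.card V : ℝ) ^ 2)).congr fun k ↦
    mul_div_cancel_right₀ (c k) card_pos.ne'
  have tendsto_bound : Tendsto (fun k ↦ (Fintype.card V : ℝ) ^ 5 * walkBound (c k)) atTop
      (𝓝 ((Fintype.card V : ℝ) ^ 5 *
        walkBound ((∑ v, walkVec G 1 v) / (Fintype.card V : ℝ) ^ 2))) :=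
    ((continuous_walkBound.tendsto _).comp tendsto_c).const_mul _
  exact ge_of_tendsto' tendsto_bound hwalk

end Limit

theorem walk4_upper_bound {V : Type*} [Fintype V] (G : SimpleGraph V)
    (n e : ℕ) (hn : n = Fintype.card V) (he : e = Nat.card G.edgeSet)
    (c : ℝ) (hc : c = 2 * e / (n : ℝ) ^ 2) :
    (walkCount4 G : ℝ) ≤
      max ((1 - Real.sqrt (1 - c)) ^ 2 * ((c + 1) * Real.sqrt (1 - c) + c))
        (c ^ ((5 : ℝ) / 2)) * (n : ℝ) ^ 5 := by
  rw [hc, hn, he]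
  cases isEmpty_or_nonempty V
  · simp [walkCount4_eq_dotProduct]
  · rw [← sum_walkVec_one, mul_comm]
    exact walkCount4_le_walkBound G
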